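/- Let ψ : C → D be a quasi-isomorphism of 2-reduced dg coalgebras over ℚ. Then the induced morphism of cobar constructions Ωψ : ΩC → ΩD is a quasi-isomorphism of dg algebras. -/

import Mathlib

open scoped TensorProduct

noncomputable section

/-- A homologically graded differential graded `ℚ`-vector space (chain complex of
`ℚ`-vector spaces presented as a graded module with a degree `-1` square-zero differential). -/
structure DGVect : Type 1 where
  carrier : Type
  [isAddCommGroup : AddCommGroup carrier]
  [isModule : Module ℚ carrier]
  grading : ℤ → Submodule ℚ carrier
  [isDecomp : DirectSum.Decomposition grading]
  d : carrier →ₗ[ℚ] carrier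
  d_mem : ∀ (n : ℤ), ∀ x ∈ grading n, d x ∈ grading (n - 1)
  d_sq : d.comp d = 0

attribute [instance] DGVect.isAddCommGroup DGVect.isModule DGVect.isDecomp

/-- The operator acting on the degree `n` graded component by `(-1)^(k*n)`. -/
def signOpOf {V : Type} [AddCommGroup V] [Module ℚ V] (g : ℤ → Submodule ℚ V)
    [DirectSum.Decomposition g] (k : ℤ) : V →ₗ[ℚ] V :=
  (DirectSum.toModule ℚ ℤ V fun n => ((-1 : ℚ) ^ (k * n)) • (g n).subtype).comp
    (DirectSum.decomposeLinearEquiv g).toLinearMap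

/-- The Koszul parity operator, acting by `(-1)^n` in degree `n`. -/
def parityOf {V : Type} [AddCommGroup V] [Module ℚ V] (g : ℤ → Submodule ℚ V)
    [DirectSum.Decomposition g] : V →ₗ[ℚ] V := signOpOf g 1

def DGVect.parity (V : DGVect) : V.carrier →ₗ[ℚ] V.carrier := parityOf V.grading

/-- A graded object is bounded below if it vanishes in all sufficiently negative degrees. -/
def DGVect.BoundedBelow (V : DGVect) : Prop := ∃ b : ℤ, ∀ n : ℤ, n < b → V.grading n = ⊥

/-- The Koszul signed braiding `v ⊗ w ↦ (-1)^{|v||w|} w ⊗ v` of graded vector spaces. -/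
def kSwapOf {V W : Type} [AddCommGroup V] [Module ℚ V] [AddCommGroup W] [Module ℚ W]
    (gV : ℤ → Submodule ℚ V) (gW : ℤ → Submodule ℚ W)
    [DirectSum.Decomposition gV] [DirectSum.Decomposition gW] :
    V ⊗[ℚ] W →ₗ[ℚ] W ⊗[ℚ] V :=
  TensorProduct.lift
    ((DirectSum.toModule ℚ ℤ (W →ₗ[ℚ] W ⊗[ℚ] V) (fun i =>
        (((DirectSum.toModule ℚ ℤ (V →ₗ[ℚ] W ⊗[ℚ] V) (fun j =>
              ((-1 : ℚ) ^ (i * j)) • ((TensorProduct.mk ℚ W V).comp (gW j).subtype))).comp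
            (DirectSum.decomposeLinearEquiv gW).toLinearMap).flip).comp
          (gV i).subtype)).comp
      (DirectSum.decomposeLinearEquiv gV).toLinearMap)

/-- The degree `n` part of the tensor product grading:
the span of the homogeneous tensors of total degree `n`. -/
def tensorGrading {V W : Type} [AddCommGroup V] [Module ℚ V] [AddCommGroup W] [Module ℚ W]
    (gV : ℤ → Submodule ℚ V) (gW : ℤ → Submodule ℚ W) (n : ℤ) : Submodule ℚ (V ⊗[ℚ] W) :=
  ⨆ p : {p : ℤ × ℤ // p.1 + p.2 = n},
    LinearMap.range (TensorProduct.map (gV p.1.1).subtype (gW p.1.2).subtype)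

/-- `f` is a quasi-isomorphism from the complex `(V, dV)` to the complex `(W, dW)`:
it induces a bijection on homology (`ker d / im d`). -/
def IsQuasiIso {V W : Type} [AddCommGroup V] [Module ℚ V] [AddCommGroup W] [Module ℚ W]
    (dV : V →ₗ[ℚ] V) (dW : W →ₗ[ℚ] W) (f : V →ₗ[ℚ] W) : Prop :=
  (∀ x : V, dV x = 0 → (∃ y, f x = dW y) → ∃ z, x = dV z) ∧
  (∀ w : W, dW w = 0 → ∃ x, dV x = 0 ∧ ∃ y, w - f x = dW y)

/-- A differential graded algebra over `ℚ`. -/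
structure DGAlgebra extends DGVect where
  mul : carrier →ₗ[ℚ] carrier →ₗ[ℚ] carrier
  one : carrier
  one_mem : one ∈ grading 0
  mul_mem : ∀ (i j : ℤ) (x y : carrier), x ∈ grading i → y ∈ grading j →
    mul x y ∈ grading (i + j)
  mul_assoc' : ∀ x y z : carrier, mul (mul x y) z = mul x (mul y z)
  one_mul' : ∀ x : carrier, mul one x = x
  mul_one' : ∀ x : carrier, mul x one = x
  leibniz : ∀ (i : ℤ) (x y : carrier), x ∈ grading i →
    d (mul x y) = mul (d x) y + ((-1 : ℚ) ^ i) • mul x (d y)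

/-- The multiplication of a dg algebra as a map out of the tensor product. -/
def DGAlgebra.mulMap (A : DGAlgebra) : A.carrier ⊗[ℚ] A.carrier →ₗ[ℚ] A.carrier :=
  TensorProduct.lift A.mul

/-- A dg algebra is connective if it is concentrated in non-negative degrees. -/
def DGAlgebra.Connective (A : DGAlgebra) : Prop := ∀ n : ℤ, n < 0 → A.grading n = ⊥

/-- A (coassociative counital) differential graded coalgebra over `ℚ`,
non-negatively graded. -/
structure DGCoalgebra extends DGVect where
  comul : carrier →ₗ[ℚ] carrier ⊗[ℚ] carrier
  counit : carrier →ₗ[ℚ] ℚ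
  nonneg : ∀ n : ℤ, n < 0 → grading n = ⊥
  comul_mem : ∀ (n : ℤ), ∀ x ∈ grading n, comul x ∈ tensorGrading grading grading n
  counit_zero : ∀ (n : ℤ), n ≠ 0 → ∀ x ∈ grading n, counit x = 0
  coassoc : (TensorProduct.assoc ℚ carrier carrier carrier).toLinearMap.comp
      ((TensorProduct.map comul LinearMap.id).comp comul)
      = (TensorProduct.map LinearMap.id comul).comp comul
  counit_comul_left : (TensorProduct.lid ℚ carrier).toLinearMap.comp
      ((TensorProduct.map counit LinearMap.id).comp comul) = LinearMap.id
  counit_comul_right : (TensorProduct.rid ℚ carrier).toLinearMap.comp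
      ((TensorProduct.map LinearMap.id counit).comp comul) = LinearMap.id
  comul_chain : comul.comp d
      = (TensorProduct.map d LinearMap.id + TensorProduct.map (parityOf grading) d).comp comul
  counit_chain : counit.comp d = 0

/-- Cocommutativity: the comultiplication is invariant under the Koszul signed twist. -/
def DGCoalgebra.Cocomm (C : DGCoalgebra) : Prop :=
  (kSwapOf C.grading C.grading).comp C.comul = C.comul

/-- A coaugmented dg coalgebra: a dg coalgebra with a coaugmentation `η : ℚ → C`,
recorded by the grouplike element `one = η 1` in degree `0`. -/
structure CoaugDGCoalgebra extends DGCoalgebra where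
  one : carrier
  one_mem : one ∈ grading 0
  counit_one : counit one = 1
  comul_one : comul one = one ⊗ₜ[ℚ] one

/-- A coaugmented dg coalgebra is 2-reduced if `C₀ = ℚ` (spanned by the coaugmentation)
and `C₁ = 0`. -/
def CoaugDGCoalgebra.TwoReduced (C : CoaugDGCoalgebra) : Prop :=
  C.grading 0 = Submodule.span ℚ {C.one} ∧ C.grading 1 = ⊥

/-- A twisting chain `τ : C ⇝ A`: a degree `-1` linear map satisfying
`d(τc) = -τ(dc) - (-1)^{|c₍₀₎|} τ(c₍₀₎)·τ(c₍₁₎)`. -/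
structure TwistingChain (C : DGCoalgebra) (A : DGAlgebra) where
  toFun : C.carrier →ₗ[ℚ] A.carrier
  mem : ∀ (n : ℤ), ∀ x ∈ C.grading n, toFun x ∈ A.grading (n - 1)
  twist : A.d.comp toFun + toFun.comp C.d
      + A.mulMap.comp ((TensorProduct.map (toFun.comp (parityOf C.grading)) toFun).comp C.comul)
      = 0

/-- A left dg module over a dg algebra. -/
structure DGModule (A : DGAlgebra) extends DGVect where
  smul : A.carrier →ₗ[ℚ] carrier →ₗ[ℚ] carrier
  smul_mem : ∀ (i j : ℤ) (a : A.carrier) (x : carrier), a ∈ A.grading i → x ∈ grading j →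
    smul a x ∈ grading (i + j)
  one_smul' : ∀ x : carrier, smul A.one x = x
  mul_smul' : ∀ (a b : A.carrier) (x : carrier), smul (A.mul a b) x = smul a (smul b x)
  leibniz : ∀ (i : ℤ) (a : A.carrier) (x : carrier), a ∈ A.grading i →
    d (smul a x) = smul (A.d a) x + ((-1 : ℚ) ^ i) • smul a (d x)

/-- The action of a dg module as a map out of the tensor product. -/
def DGModule.actionMap {A : DGAlgebra} (M : DGModule A) :
    A.carrier ⊗[ℚ] M.carrier →ₗ[ℚ] M.carrier := TensorProduct.lift M.smul

/-- A left dg comodule over a dg coalgebra. -/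
structure DGComodule (C : DGCoalgebra) extends DGVect where
  coact : carrier →ₗ[ℚ] C.carrier ⊗[ℚ] carrier
  coact_mem : ∀ (n : ℤ), ∀ x ∈ grading n, coact x ∈ tensorGrading C.grading grading n
  coassoc : (TensorProduct.assoc ℚ C.carrier C.carrier carrier).toLinearMap.comp
      ((TensorProduct.map C.comul LinearMap.id).comp coact)
      = (TensorProduct.map LinearMap.id coact).comp coact
  counit_coact : (TensorProduct.lid ℚ carrier).toLinearMap.comp
      ((TensorProduct.map C.counit LinearMap.id).comp coact) = LinearMap.id
  coact_chain : coact.comp d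
      = (TensorProduct.map C.d LinearMap.id + TensorProduct.map (parityOf C.grading) d).comp coact

/-- Morphisms of dg modules: degree `0` graded chain maps commuting with the action. -/
def IsModuleHom (A : DGAlgebra) (M M' : DGModule A)
    (g : M.carrier →ₗ[ℚ] M'.carrier) : Prop :=
  (∀ (n : ℤ), ∀ x ∈ M.grading n, g x ∈ M'.grading n) ∧
  g.comp M.d = M'.d.comp g ∧
  g.comp M.actionMap = M'.actionMap.comp (TensorProduct.map LinearMap.id g)

/-- Morphisms of dg comodules: degree `0` graded chain maps commuting with the coaction. -/
def IsComoduleHom (C : DGCoalgebra) (N N' : DGComodule C)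
    (f : N.carrier →ₗ[ℚ] N'.carrier) : Prop :=
  (∀ (n : ℤ), ∀ x ∈ N.grading n, f x ∈ N'.grading n) ∧
  f.comp N.d = N'.d.comp f ∧
  (TensorProduct.map LinearMap.id f).comp N.coact = N'.coact.comp f

/-- The `A`-action on a twisted extension `A ⊗_τ N`: multiplication on the first factor. -/
def extAction (A : DGAlgebra) (N : Type) [AddCommGroup N] [Module ℚ N] :
    A.carrier ⊗[ℚ] (A.carrier ⊗[ℚ] N) →ₗ[ℚ] A.carrier ⊗[ℚ] N :=
  (TensorProduct.map A.mulMap LinearMap.id).comp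
    (TensorProduct.assoc ℚ A.carrier A.carrier N).symm.toLinearMap

/-- The differential of the twisted extension `A ⊗_τ N`:
`d(a ⊗ n) = da ⊗ n + (-1)^{|a|} a ⊗ dn - (-1)^{|a|} a·τ(n₍₀₎) ⊗ n₍₁₎`
for a `C`-comodule `(N, dN, ρ)`. -/
def extDiff (C : DGCoalgebra) (A : DGAlgebra) (τ : TwistingChain C A)
    (N : Type) [AddCommGroup N] [Module ℚ N]
    (dN : N →ₗ[ℚ] N) (ρ : N →ₗ[ℚ] C.carrier ⊗[ℚ] N) :
    A.carrier ⊗[ℚ] N →ₗ[ℚ] A.carrier ⊗[ℚ] N :=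
  TensorProduct.map A.d LinearMap.id + TensorProduct.map (parityOf A.grading) dN
    - (TensorProduct.map
        (A.mulMap.comp (TensorProduct.map (parityOf A.grading) τ.toFun)) LinearMap.id).comp
        ((TensorProduct.assoc ℚ A.carrier C.carrier N).symm.toLinearMap.comp
          (TensorProduct.map LinearMap.id ρ))

/-- The `C`-coaction on a twisted coextension `C ⊗^τ M`, namely `Δ ⊗ id`. -/
def coextCoact (C : DGCoalgebra) (M : Type) [AddCommGroup M] [Module ℚ M] :
    C.carrier ⊗[ℚ] M →ₗ[ℚ] C.carrier ⊗[ℚ] (C.carrier ⊗[ℚ] M) :=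
  (TensorProduct.assoc ℚ C.carrier C.carrier M).toLinearMap.comp
    (TensorProduct.map C.comul LinearMap.id)

/-- The differential of the twisted coextension `C ⊗^τ M`, expressed in terms of the map
`tact : C ⊗ M → M`, `c ⊗ m ↦ τ(c)·m`:
`d(c ⊗ m) = dc ⊗ m + (-1)^{|c|} c ⊗ dm + (-1)^{|c₍₀₎|} c₍₀₎ ⊗ τ(c₍₁₎)·m`. -/
def coextDiffFrom (C : DGCoalgebra) (M : Type) [AddCommGroup M] [Module ℚ M]
    (dM : M →ₗ[ℚ] M) (tact : C.carrier ⊗[ℚ] M →ₗ[ℚ] M) :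
    C.carrier ⊗[ℚ] M →ₗ[ℚ] C.carrier ⊗[ℚ] M :=
  TensorProduct.map C.d LinearMap.id + TensorProduct.map (parityOf C.grading) dM
    + (TensorProduct.map (parityOf C.grading) tact).comp (coextCoact C M)

/-- The differential of the twisted coextension `C ⊗^τ M` of an `A`-module `(M, dM, act)`. -/
def coextDiff (C : DGCoalgebra) (A : DGAlgebra) (τ : TwistingChain C A)
    (M : Type) [AddCommGroup M] [Module ℚ M]
    (dM : M →ₗ[ℚ] M) (act : A.carrier ⊗[ℚ] M →ₗ[ℚ] M) :
    C.carrier ⊗[ℚ] M →ₗ[ℚ] C.carrier ⊗[ℚ] M :=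
  coextDiffFrom C M dM (act.comp (TensorProduct.map τ.toFun LinearMap.id))

/-- Morphisms of dg algebras. -/
structure DGAlgebraHom (A B : DGAlgebra) where
  toLinearMap : A.carrier →ₗ[ℚ] B.carrier
  mem : ∀ (n : ℤ), ∀ x ∈ A.grading n, toLinearMap x ∈ B.grading n
  chain : toLinearMap.comp A.d = B.d.comp toLinearMap
  map_one : toLinearMap A.one = B.one
  map_mul : ∀ x y : A.carrier, toLinearMap (A.mul x y) = B.mul (toLinearMap x) (toLinearMap y)

/-- Data exhibiting a dg algebra as the cobar construction `ΩC` of a coaugmented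
dg coalgebra `C`, via the universal twisting chain `t : C ⇝ ΩC`:
dg algebra maps `ΩC → A` correspond bijectively to twisting chains `C ⇝ A`
vanishing on the coaugmentation. -/
structure CobarData (C : CoaugDGCoalgebra) where
  alg : DGAlgebra
  t : TwistingChain C.toDGCoalgebra alg
  t_one : t.toFun C.one = 0
  univ : ∀ (A : DGAlgebra) (τ : TwistingChain C.toDGCoalgebra A), τ.toFun C.one = 0 →
    ∃! F : DGAlgebraHom alg A, F.toLinearMap.comp t.toFun = τ.toFun

/-- A morphism of `C`-comodules is a `t`-equivalence if the induced morphism of twisted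
extensions `ΩC ⊗_t N → ΩC ⊗_t M` is a quasi-isomorphism. -/
def IsTEquiv (C : CoaugDGCoalgebra) (Ω : CobarData C) (N M : DGComodule C.toDGCoalgebra)
    (f : N.carrier →ₗ[ℚ] M.carrier) : Prop :=
  IsQuasiIso (extDiff C.toDGCoalgebra Ω.alg Ω.t N.carrier N.d N.coact)
    (extDiff C.toDGCoalgebra Ω.alg Ω.t M.carrier M.d M.coact)
    (TensorProduct.map LinearMap.id f)

/-! ## Statement 9: the cobar construction preserves quasi-isomorphisms -/

/-- A morphism of coaugmented dg coalgebras. -/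
structure CoaugCoalgebraHom (C D : CoaugDGCoalgebra) where
  toLinearMap : C.carrier →ₗ[ℚ] D.carrier
  mem : ∀ (n : ℤ), ∀ x ∈ C.grading n, toLinearMap x ∈ D.grading n
  chain : toLinearMap.comp C.d = D.d.comp toLinearMap
  comul_comp : (TensorProduct.map toLinearMap toLinearMap).comp C.comul
    = D.comul.comp toLinearMap
  counit_comp : D.counit.comp toLinearMap = C.counit
  map_one : toLinearMap C.one = D.one

namespace CobarProof

lemma parityOf_mem {V : Type} [AddCommGroup V] [Module ℚ V] (g : ℤ → Submodule ℚ V)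
    [DirectSum.Decomposition g] (n : ℤ) (x : V) (hx : x ∈ g n) :
    parityOf g x = ((-1 : ℚ) ^ n) • x := by
  simp only [parityOf, signOpOf, LinearMap.comp_apply, LinearEquiv.coe_coe,
    DirectSum.decomposeLinearEquiv_apply]
  rw [DirectSum.decompose_of_mem g hx, ← DirectSum.lof_eq_of ℚ, DirectSum.toModule_lof]
  simp

lemma lin_ext {V : Type} [AddCommGroup V] [Module ℚ V] (g : ℤ → Submodule ℚ V)
    [DirectSum.Decomposition g] {M : Type} [AddCommGroup M] [Module ℚ M]
    {f f' : V →ₗ[ℚ] M} (h : ∀ n, ∀ x ∈ g n, f x = f' x) : f = f' := by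
  ext x
  induction x using DirectSum.Decomposition.inductionOn g with
  | zero => simp
  | @homogeneous i m => exact h i m m.2
  | add a b ha hb => rw [map_add, map_add, ha, hb]

/-- Projection to the degree `n` component. -/
def proj {V : Type} [AddCommGroup V] [Module ℚ V] (g : ℤ → Submodule ℚ V)
    [DirectSum.Decomposition g] (n : ℤ) : V →ₗ[ℚ] V :=
  ((g n).subtype.comp (DirectSum.component ℚ ℤ (fun i => g i) n)).comp
    (DirectSum.decomposeLinearEquiv g).toLinearMap

section
variable {V W : Type} [AddCommGroup V] [Module ℚ V] (g : ℤ → Submodule ℚ V)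
    [DirectSum.Decomposition g] [AddCommGroup W] [Module ℚ W] (gW : ℤ → Submodule ℚ W)
    [DirectSum.Decomposition gW]

lemma proj_apply (n : ℤ) (x : V) : proj g n x = DirectSum.decompose g x n := rfl

lemma proj_mem (n : ℤ) (x : V) : proj g n x ∈ g n := by
  rw [proj_apply]; exact (DirectSum.decompose g x n).2

lemma proj_same {n : ℤ} {x : V} (hx : x ∈ g n) : proj g n x = x := by
  rw [proj_apply]; exact DirectSum.decompose_of_mem_same g hx

lemma proj_ne {n m : ℤ} {x : V} (hx : x ∈ g n) (h : n ≠ m) : proj g m x = 0 := by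
  rw [proj_apply]; exact DirectSum.decompose_of_mem_ne g hx h

lemma proj_comm {k : ℤ} {f : V →ₗ[ℚ] W} (hf : ∀ n, ∀ x ∈ g n, f x ∈ gW (n + k)) (n m : ℤ)
    (hm : n + k = m) (x : V) : proj gW m (f x) = f (proj g n x) := by
  subst hm
  have : (proj gW (n + k)).comp f = f.comp (proj g n) := by
    refine lin_ext g fun i x hx => ?_
    simp only [LinearMap.comp_apply]
    by_cases h : i = n
    · subst h
      rw [proj_same g hx, proj_same gW (hf _ _ hx)]
    · rw [proj_ne g hx h, proj_ne gW (hf _ _ hx) (by omega), map_zero]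
  exact LinearMap.congr_fun this x

lemma sum_proj (x : V) : ∃ s : Finset ℤ, ∀ s', s ⊆ s' → ∑ n ∈ s', proj g n x = x := by
  classical
  refine ⟨(DirectSum.decompose g x).support, fun s' hs => ?_⟩
  conv_rhs => rw [← DirectSum.sum_support_decompose g x]
  symm
  refine Finset.sum_subset hs fun n _ hn => ?_
  simpa using hn

/-- The degree `k` part of a linear map. -/
def part (k : ℤ) (f : V →ₗ[ℚ] W) : V →ₗ[ℚ] W :=
  (DirectSum.toModule ℚ ℤ W fun n => (proj gW (n + k)).comp (f.comp (g n).subtype)).comp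
    (DirectSum.decomposeLinearEquiv g).toLinearMap

lemma part_mem_eq (k : ℤ) (f : V →ₗ[ℚ] W) {n : ℤ} {x : V} (hx : x ∈ g n) :
    part g gW k f x = proj gW (n + k) (f x) := by
  simp only [part, LinearMap.comp_apply, LinearEquiv.coe_coe,
    DirectSum.decomposeLinearEquiv_apply]
  rw [DirectSum.decompose_of_mem g hx, ← DirectSum.lof_eq_of ℚ, DirectSum.toModule_lof]
  simp

lemma part_mem (k : ℤ) (f : V →ₗ[ℚ] W) {n : ℤ} {x : V} (hx : x ∈ g n) :
    part g gW k f x ∈ gW (n + k) := by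
  rw [part_mem_eq g gW k f hx]; exact proj_mem _ _ _
end

lemma exists_pseudo {K : Type} [AddCommGroup K] [Module ℚ K] (d : K →ₗ[ℚ] K) :
    ∃ s : K →ₗ[ℚ] K, ∀ x, d (s (d x)) = d x := by
  obtain ⟨r, hr⟩ := d.rangeRestrict.exists_rightInverse_of_surjective d.range_rangeRestrict
  obtain ⟨s, hs⟩ := LinearMap.exists_extend r
  refine ⟨s, fun x => ?_⟩
  have h1 := LinearMap.congr_fun hs (d.rangeRestrict x)
  have h2 := LinearMap.congr_fun hr (d.rangeRestrict x)
  simp only [LinearMap.comp_apply, Submodule.subtype_apply, LinearMap.id_apply] at h1 h2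
  have h3 := congrArg Subtype.val h2
  rw [← h1] at h3
  simpa using h3

lemma exists_contraction {K : Type} [AddCommGroup K] [Module ℚ K] (d : K →ₗ[ℚ] K)
    (dd : ∀ x, d (d x) = 0) (hd : ∀ x, d x = 0 → ∃ y, x = d y) :
    ∃ s : K →ₗ[ℚ] K, ∀ x, d (s x) + s (d x) = x := by
  obtain ⟨s, hs⟩ := exists_pseudo d
  refine ⟨s - (s.comp s).comp d, fun x => ?_⟩
  obtain ⟨y, hy⟩ := hd (x - s (d x)) (by rw [map_sub, hs, sub_self])
  have := hs y
  rw [← hy] at this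
  simp only [LinearMap.sub_apply, LinearMap.comp_apply, dd, map_zero, map_sub] at *
  rw [sub_zero]
  linear_combination (norm := module) this

lemma exists_htpy {V W : Type} [AddCommGroup V] [Module ℚ V] [AddCommGroup W] [Module ℚ W]
    (d : V →ₗ[ℚ] V) (d' : W →ₗ[ℚ] W) (f : V →ₗ[ℚ] W) (dd : ∀ x, d (d x) = 0)
    (dd' : ∀ x, d' (d' x) = 0) (hf : ∀ x, f (d x) = d' (f x)) (hq : IsQuasiIso d d' f) :
    ∃ (φ : W →ₗ[ℚ] V) (a : V →ₗ[ℚ] V) (b : W →ₗ[ℚ] W),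
      (∀ y, φ (d' y) = d (φ y)) ∧ (∀ x, φ (f x) - x = d (a x) + a (d x)) ∧
      (∀ y, f (φ y) - y = d' (b y) + b (d' y)) := by
  let dK : (V × W) →ₗ[ℚ] (V × W) :=
    (-(d.comp (LinearMap.fst ℚ V W))).prod
      (f.comp (LinearMap.fst ℚ V W) + d'.comp (LinearMap.snd ℚ V W))
  have hdK : ∀ x y, dK (x, y) = (-d x, f x + d' y) := fun x y => rfl
  obtain ⟨s, hs⟩ := exists_contraction dK
    (by rintro ⟨x, y⟩; simp [hdK, dd, dd', hf])
    (by
      rintro ⟨x, y⟩ h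
      rw [hdK, Prod.mk_eq_zero, neg_eq_zero] at h
      obtain ⟨h1, h2⟩ := h
      obtain ⟨z, hz⟩ := hq.1 x h1 ⟨-y, by rw [map_neg]; exact eq_neg_of_add_eq_zero_left h2⟩
      obtain ⟨x', hx', w, hw⟩ := hq.2 (y + f z) (by rw [map_add, ← hf, ← hz, add_comm, h2])
      refine ⟨(-z + x', w), ?_⟩
      rw [hdK, ← hw, map_add, map_add, map_neg, map_neg, hx', ← hz]
      ext <;> simp)
  refine ⟨(LinearMap.fst ℚ V W).comp (s.comp (LinearMap.inr ℚ V W)),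
    (LinearMap.fst ℚ V W).comp (s.comp (LinearMap.inl ℚ V W)),
    -((LinearMap.snd ℚ V W).comp (s.comp (LinearMap.inr ℚ V W))), ?_, ?_, ?_⟩
  · intro y
    have h := congrArg Prod.fst (hs (0, y))
    rw [hdK 0 y] at h
    simp only [map_zero, neg_zero, zero_add, Prod.fst_add] at h
    change - d (s (0, y)).1 + _ = 0 at h
    change (s (0, d' y)).1 = d (s (0, y)).1
    linear_combination (norm := module) h
  · intro x
    have h := congrArg Prod.fst (hs (x, 0))
    rw [hdK x 0] at h
    simp only [map_zero, add_zero, Prod.fst_add] at h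
    have e : ((-d x, f x) : V × W) = (0, f x) - (d x, 0) := by ext <;> simp
    rw [e, map_sub] at h
    change - d (s (x, 0)).1 + ((s (0, f x)).1 - (s (d x, 0)).1) = x at h
    change (s (0, f x)).1 - x = d (s (x, 0)).1 + (s (d x, 0)).1
    linear_combination (norm := module) h
  · intro y
    have h := congrArg Prod.snd (hs (0, y))
    rw [hdK 0 y] at h
    simp only [map_zero, neg_zero, zero_add, Prod.snd_add] at h
    change f (s (0, y)).1 + d' (s (0, y)).2 + (s (0, d' y)).2 = y at h
    change f (s (0, y)).1 - y = d' (-(s (0, y)).2) + -(s (0, d' y)).2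
    rw [map_neg]
    linear_combination (norm := module) h

/-- A graded homotopy inverse of a quasi-isomorphism. -/
lemma exists_graded_htpy (V W : DGVect) (f : V.carrier →ₗ[ℚ] W.carrier)
    (hmem : ∀ n, ∀ x ∈ V.grading n, f x ∈ W.grading n)
    (hf : ∀ x, f (V.d x) = W.d (f x)) (hq : IsQuasiIso V.d W.d f) :
    ∃ (φ : W.carrier →ₗ[ℚ] V.carrier) (a : V.carrier →ₗ[ℚ] V.carrier)
      (b : W.carrier →ₗ[ℚ] W.carrier),
      (∀ n, ∀ y ∈ W.grading n, φ y ∈ V.grading n) ∧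
      (∀ n, ∀ y ∈ V.grading n, a y ∈ V.grading (n + 1)) ∧
      (∀ n, ∀ y ∈ W.grading n, b y ∈ W.grading (n + 1)) ∧
      (∀ y, φ (W.d y) = V.d (φ y)) ∧ (∀ x, φ (f x) - x = V.d (a x) + a (V.d x)) ∧
      (∀ y, f (φ y) - y = W.d (b y) + b (W.d y)) := by
  obtain ⟨φ, a, b, h1, h2, h3⟩ := exists_htpy V.d W.d f
    (fun x => LinearMap.congr_fun V.d_sq x) (fun x => LinearMap.congr_fun W.d_sq x) hf hq
  have dV : ∀ n, ∀ x ∈ V.grading n, V.d x ∈ V.grading (n + -1) := V.d_mem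
  have dW : ∀ n, ∀ x ∈ W.grading n, W.d x ∈ W.grading (n + -1) := W.d_mem
  have hm0 : ∀ n, ∀ x ∈ V.grading n, f x ∈ W.grading (n + 0) := by simpa using hmem
  refine ⟨part W.grading V.grading 0 φ, part V.grading V.grading 1 a,
    part W.grading W.grading 1 b, ?_, ?_, ?_, ?_, ?_, ?_⟩
  · intro n y hy
    simpa using part_mem W.grading V.grading 0 φ hy
  · intro n y hy
    exact part_mem _ _ 1 a hy
  · intro n y hy
    exact part_mem _ _ 1 b hy
  · refine fun y => LinearMap.congr_fun (f := (part W.grading V.grading 0 φ).comp W.d)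
      (g := V.d.comp (part W.grading V.grading 0 φ)) (lin_ext W.grading fun n y hy => ?_) y
    simp only [LinearMap.comp_apply]
    rw [part_mem_eq _ _ _ _ hy, part_mem_eq _ _ _ _ (W.d_mem n y hy), h1,
      proj_comm V.grading V.grading dV (n + 0) _ (by ring)]
  · refine fun y => LinearMap.congr_fun (f := (part W.grading V.grading 0 φ).comp f - LinearMap.id)
      (g := V.d.comp (part V.grading V.grading 1 a) + (part V.grading V.grading 1 a).comp V.d)
      (lin_ext V.grading fun n y hy => ?_) y
    simp only [LinearMap.comp_apply, LinearMap.add_apply, LinearMap.sub_apply, LinearMap.id_apply]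
    rw [part_mem_eq _ _ _ _ hy, part_mem_eq _ _ _ _ (V.d_mem n y hy),
      part_mem_eq _ _ _ _ (hmem n y hy), ← proj_comm V.grading V.grading dV (n + 1) n (by ring)]
    have := congrArg (proj V.grading n) (h2 y)
    rw [map_sub, map_add, proj_same _ hy] at this
    simpa using this
  · refine fun y => LinearMap.congr_fun (f := f.comp (part W.grading V.grading 0 φ) - LinearMap.id)
      (g := W.d.comp (part W.grading W.grading 1 b) + (part W.grading W.grading 1 b).comp W.d)
      (lin_ext W.grading fun n y hy => ?_) y
    simp only [LinearMap.comp_apply, LinearMap.add_apply, LinearMap.sub_apply, LinearMap.id_apply]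
    rw [part_mem_eq _ _ _ _ hy, part_mem_eq _ _ _ _ hy, part_mem_eq _ _ _ _ (W.d_mem n y hy),
      ← proj_comm W.grading W.grading dW (n + 1) n (by ring),
      ← proj_comm V.grading W.grading hm0 (n + 0) n (by ring)]
    have := congrArg (proj W.grading n) (h3 y)
    rw [map_sub, map_add, proj_same _ hy] at this
    simpa using this

end CobarProof

namespace CobarProof

/-- The underlying algebra of the cobar construction. -/
abbrev T (C : CoaugDGCoalgebra) : Type := TensorAlgebra ℚ (LinearMap.ker C.counit)

/-- The projection `C → ker ε`. -/
def red (C : CoaugDGCoalgebra) : C.carrier →ₗ[ℚ] LinearMap.ker C.counit :=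
  (LinearMap.id - C.counit.smulRight C.one).codRestrict _ (by
    intro c; simp [C.counit_one])

/-- The universal map `C → T C`. -/
def tt (C : CoaugDGCoalgebra) : C.carrier →ₗ[ℚ] T C := (TensorAlgebra.ι ℚ).comp (red C)

section
variable {C : CoaugDGCoalgebra}

lemma red_val (c : C.carrier) : (red C c : C.carrier) = c - C.counit c • C.one := rfl

lemma red_one : red C C.one = 0 := by
  apply Subtype.ext; rw [red_val]; simp [C.counit_one]

lemma red_coe (v : LinearMap.ker C.counit) : red C v = v := by
  apply Subtype.ext; rw [red_val, LinearMap.mem_ker.1 v.2]; simp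

lemma tt_one : tt C C.one = 0 := by simp [tt, red_one]

lemma tt_coe (v : LinearMap.ker C.counit) : tt C v = TensorAlgebra.ι ℚ v := by
  simp [tt, red_coe]

/-- The universal property of `T C` as an algebra. -/
def tlift {A : Type} [Ring A] [Algebra ℚ A] (L : C.carrier →ₗ[ℚ] A) : T C →ₐ[ℚ] A :=
  TensorAlgebra.lift ℚ (L.comp (LinearMap.ker C.counit).subtype)

lemma tlift_tt {A : Type} [Ring A] [Algebra ℚ A] (L : C.carrier →ₗ[ℚ] A) (hL : L C.one = 0)
    (c : C.carrier) : tlift L (tt C c) = L c := by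
  simp [tlift, tt, red_val, hL]

lemma talg_ext {A : Type} [Ring A] [Algebra ℚ A] {f g : T C →ₐ[ℚ] A}
    (h : ∀ c, f (tt C c) = g (tt C c)) : f = g := by
  apply TensorAlgebra.hom_ext
  ext v
  simpa [tt_coe] using h v

lemma tt_low (hC : C.TwoReduced) {m : ℤ} (hm : m < 2) {c : C.carrier} (hc : c ∈ C.grading m) :
    tt C c = 0 := by
  rcases lt_trichotomy m 0 with h | h | h
  · rw [C.nonneg m h, Submodule.mem_bot] at hc
    rw [hc, map_zero]
  · subst h
    rw [hC.1, Submodule.mem_span_singleton] at hc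
    obtain ⟨a, rfl⟩ := hc
    rw [map_smul, tt_one, smul_zero]
  · have : m = 1 := by omega
    subst this
    rw [hC.2, Submodule.mem_bot] at hc
    rw [hc, map_zero]

lemma T_top (hC : C.TwoReduced) (S : Submodule ℚ (T C)) (h1 : 1 ∈ S)
    (hm : ∀ m : ℤ, 2 ≤ m → ∀ c ∈ C.grading m, ∀ x ∈ S, tt C c * x ∈ S) (x : T C) : x ∈ S := by
  have hc : ∀ c : C.carrier, ∀ x ∈ S, tt C c * x ∈ S := by
    intro c
    induction c using DirectSum.Decomposition.inductionOn C.grading with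
    | zero => intro x _; simp
    | @homogeneous i c =>
      intro x hx
      by_cases h : 2 ≤ i
      · exact hm i h c c.2 x hx
      · rw [tt_low hC (by omega) c.2, zero_mul]; exact S.zero_mem
    | add a b ha hb =>
      intro x hx
      rw [map_add, add_mul]
      exact S.add_mem (ha x hx) (hb x hx)
  have key : ∀ a : T C, ∀ x ∈ S, a * x ∈ S := by
    intro a
    induction a using TensorAlgebra.induction with
    | algebraMap r =>
      intro x hx
      rw [← Algebra.smul_def]; exact S.smul_mem _ hx
    | ι v =>
      intro x hx
      rw [← tt_coe]; exact hc _ x hx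
    | mul a b ha hb =>
      intro x hx
      rw [mul_assoc]; exact ha _ (hb _ hx)
    | add a b ha hb =>
      intro x hx
      rw [add_mul]; exact S.add_mem (ha _ hx) (hb _ hx)
  simpa using key x 1 h1

lemma tlin_ext (hC : C.TwoReduced) {M : Type} [AddCommGroup M] [Module ℚ M] {f g : T C →ₗ[ℚ] M}
    (h1 : f 1 = g 1)
    (h : ∀ m : ℤ, ∀ c ∈ C.grading m, ∀ x, f x = g x → f (tt C c * x) = g (tt C c * x)) :
    f = g := by
  ext x
  exact T_top hC (LinearMap.eqLocus f g) h1 (fun m _ c hc x hx => h m c hc x hx) x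

/-- Twisted derivations, built as a matrix entry. -/
def derM {A : Type} [Ring A] [Algebra ℚ A] (f g : T C →ₐ[ℚ] A) (L : C.carrier →ₗ[ℚ] A) :
    C.carrier →ₗ[ℚ] Matrix (Fin 2) (Fin 2) A where
  toFun c := !![f (tt C c), L c; 0, g (tt C c)]
  map_add' x y := by simp
  map_smul' r x := by simp

/-- The `(f, g)`-derivation extending `L`. -/
def der {A : Type} [Ring A] [Algebra ℚ A] (f g : T C →ₐ[ℚ] A) (L : C.carrier →ₗ[ℚ] A) :
    T C →ₗ[ℚ] A where
  toFun x := tlift (derM f g L) x 0 1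
  map_add' x y := by simp
  map_smul' r x := by simp

section
variable {A : Type} [Ring A] [Algebra ℚ A] (f g : T C →ₐ[ℚ] A) (L : C.carrier →ₗ[ℚ] A)

lemma derM_one (hL : L C.one = 0) : derM f g L C.one = 0 := by
  simp only [derM, LinearMap.coe_mk, AddHom.coe_mk, tt_one, hL, map_zero]
  ext i j; fin_cases i <;> fin_cases j <;> rfl

lemma der_apply (x : T C) : der f g L x = tlift (derM f g L) x 0 1 := rfl

lemma der_tt (hL : L C.one = 0) (c : C.carrier) : der f g L (tt C c) = L c := by
  rw [der_apply, tlift_tt _ (derM_one f g L hL)]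
  simp [derM]

lemma der_one : der f g L 1 = 0 := by
  simp [der_apply]

lemma derM_entries (x : T C) : tlift (derM f g L) x 0 0 = f x ∧ tlift (derM f g L) x 1 0 = 0 ∧
    tlift (derM f g L) x 1 1 = g x := by
  induction x using TensorAlgebra.induction with
  | algebraMap r => simp [Matrix.algebraMap_matrix_apply]
  | ι v => simp [tlift, derM, tt_coe]
  | mul a b ha hb =>
    simp only [map_mul, Matrix.mul_apply, Fin.sum_univ_two, ha, hb]
    simp
  | add a b ha hb => simp [ha, hb]

lemma der_mul (x y : T C) : der f g L (x * y) = f x * der f g L y + der f g L x * g y := by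
  simp only [der_apply, map_mul, Matrix.mul_apply, Fin.sum_univ_two, derM_entries]
end

/-- Words of length `k` and degree `n`. -/
inductive IsWord (C : CoaugDGCoalgebra) : ℕ → ℤ → T C → Prop
  | one : IsWord C 0 0 1
  | cons (m : ℤ) (c : C.carrier) (k : ℕ) (n : ℤ) (x : T C) (hm : 2 ≤ m) (hc : c ∈ C.grading m)
      (hx : IsWord C k n x) : IsWord C (k + 1) (m - 1 + n) (tt C c * x)

lemma IsWord.le {k : ℕ} {n : ℤ} {x : T C} (h : IsWord C k n x) : (k : ℤ) ≤ n := by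
  induction h with
  | one => simp
  | cons m c k n x hm hc hx ih => push_cast; omega

lemma IsWord.mul {k l : ℕ} {n m : ℤ} {x y : T C} (h : IsWord C k n x) (h' : IsWord C l m y) :
    IsWord C (k + l) (n + m) (x * y) := by
  induction h with
  | one => simpa using h'
  | cons i c k n x hi hc hx ih =>
    have := IsWord.cons i c _ _ _ hi hc ih
    rw [mul_assoc]
    convert this using 1 <;> ring

/-- Span of words of degree `n` and length at least `p`. -/
def Fil (C : CoaugDGCoalgebra) (p : ℕ) (n : ℤ) : Submodule ℚ (T C) :=
  Submodule.span ℚ {x | ∃ k, p ≤ k ∧ IsWord C k n x}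

lemma Fil_bot {p : ℕ} {n : ℤ} (h : n < p) : Fil C p n = ⊥ := by
  rw [Fil, Submodule.span_eq_bot]
  rintro x ⟨k, hk, hx⟩
  have := hx.le
  omega

lemma Fil_mono {p q : ℕ} (h : p ≤ q) (n : ℤ) : Fil C q n ≤ Fil C p n :=
  Submodule.span_mono fun _ ⟨k, hk, hx⟩ => ⟨k, h.trans hk, hx⟩

lemma Fil_mul {p q : ℕ} {n m : ℤ} {x y : T C} (hx : x ∈ Fil C p n) (hy : y ∈ Fil C q m) :
    x * y ∈ Fil C (p + q) (n + m) := by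
  refine Submodule.span_induction₂ (p := fun x y _ _ => x * y ∈ Fil C (p + q) (n + m))
    ?_ ?_ ?_ ?_ ?_ ?_ ?_ hx hy
  · rintro x y ⟨k, hk, hx⟩ ⟨l, hl, hy⟩
    exact Submodule.subset_span ⟨k + l, by omega, hx.mul hy⟩
  · intros; simp
  · intros; simp
  · intro x y z _ _ _ h1 h2; rw [add_mul]; exact add_mem h1 h2
  · intro x y z _ _ _ h1 h2; rw [mul_add]; exact add_mem h1 h2
  · intro r x y _ _ h; rw [smul_mul_assoc]; exact Submodule.smul_mem _ _ h
  · intro r x y _ _ h; rw [mul_smul_comm]; exact Submodule.smul_mem _ _ h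

lemma one_mem_Fil : (1 : T C) ∈ Fil C 0 0 := Submodule.subset_span ⟨0, le_rfl, IsWord.one⟩

lemma tt_mem_Fil (hC : C.TwoReduced) {m : ℤ} {c : C.carrier} (hc : c ∈ C.grading m) :
    tt C c ∈ Fil C 1 (m - 1) := by
  by_cases h : 2 ≤ m
  · refine Submodule.subset_span ⟨1, le_rfl, ?_⟩
    simpa using IsWord.cons m c 0 0 1 h hc IsWord.one
  · rw [tt_low hC (by omega) hc]; exact zero_mem _

lemma iSup_Fil (hC : C.TwoReduced) : ⨆ n, Fil C 0 n = ⊤ := by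
  rw [eq_top_iff]
  intro x _
  refine T_top hC _ (Submodule.mem_iSup_of_mem 0 one_mem_Fil) (fun m _ c hc x hx => ?_) x
  induction hx using Submodule.iSup_induction' with
  | mem i x hx =>
    refine Submodule.mem_iSup_of_mem (m - 1 + i) ?_
    exact Fil_mono (Nat.zero_le _) _ (Fil_mul (tt_mem_Fil hC hc) hx)
  | zero => simp
  | add x y _ _ h1 h2 => rw [mul_add]; exact add_mem h1 h2

lemma tfil_ext (hC : C.TwoReduced) {M : Type} [AddCommGroup M] [Module ℚ M] {f g : T C →ₗ[ℚ] M}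
    (h : ∀ n : ℤ, ∀ x ∈ Fil C 0 n, f x = g x) : f = g := by
  ext x
  have : (⊤ : Submodule ℚ (T C)) ≤ LinearMap.eqLocus f g := by
    rw [← iSup_Fil hC]; exact iSup_le fun n x hx => h n x hx
  exact this trivial

/-- An algebra map given on generators by a map of degree zero preserves `Fil`. -/
lemma alg_Fil {D : CoaugDGCoalgebra} (f : T C →ₐ[ℚ] T D)
    (hf : ∀ m : ℤ, ∀ c ∈ C.grading m, f (tt C c) ∈ Fil D 1 (m - 1)) {p : ℕ} {n : ℤ} {x : T C}
    (hx : x ∈ Fil C p n) : f x ∈ Fil D p n := by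
  suffices Fil C p n ≤ (Fil D p n).comap f.toLinearMap from this hx
  clear hx
  refine Submodule.span_le.2 ?_
  rintro x ⟨k, hk, hx⟩
  refine Fil_mono hk _ ?_
  clear hk
  induction hx with
  | one => simpa using one_mem_Fil
  | cons m c k n x hm hc hx ih =>
    simp only [AlgHom.toLinearMap_apply, map_mul] at *
    rw [add_comm k 1]
    exact Fil_mul (hf m c hc) ih

/-- A derivation given on generators by a homogeneous map. -/
lemma der_Fil {D : CoaugDGCoalgebra} (f g : T C →ₐ[ℚ] T D)
    (hf : ∀ m : ℤ, ∀ c ∈ C.grading m, f (tt C c) ∈ Fil D 1 (m - 1))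
    (hg : ∀ m : ℤ, ∀ c ∈ C.grading m, g (tt C c) ∈ Fil D 1 (m - 1))
    (L : C.carrier →ₗ[ℚ] T D) (hL1 : L C.one = 0) (j : ℕ) (l : ℤ)
    (hL : ∀ m : ℤ, ∀ c ∈ C.grading m, L c ∈ Fil D (1 + j) (m - 1 + l)) {p : ℕ} {n : ℤ} {x : T C}
    (hx : x ∈ Fil C p n) : der f g L x ∈ Fil D (p + j) (n + l) := by
  suffices Fil C p n ≤ (Fil D (p + j) (n + l)).comap (der f g L) from this hx
  clear hx
  refine Submodule.span_le.2 ?_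
  rintro x ⟨k, hk, hx⟩
  refine Fil_mono (show p + j ≤ k + j by omega) _ ?_
  clear hk
  induction hx with
  | one => simp [der_one]
  | cons m c k n x hm hc hx ih =>
    rw [der_mul, der_tt f g L hL1]
    refine add_mem ?_ ?_
    · convert Fil_mul (hf m c hc) ih using 2 <;> ring
    · convert Fil_mul (hL m c hc)
        (alg_Fil g hg (Submodule.subset_span ⟨k, le_rfl, hx⟩)) using 2 <;> ring

end

end CobarProof

namespace CobarProof

lemma tensorGrading_le {V W : Type} [AddCommGroup V] [Module ℚ V] [AddCommGroup W] [Module ℚ W]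
    (gV : ℤ → Submodule ℚ V) (gW : ℤ → Submodule ℚ W) (n : ℤ) (S : Submodule ℚ (V ⊗[ℚ] W))
    (h : ∀ i j, i + j = n → ∀ x ∈ gV i, ∀ y ∈ gW j, x ⊗ₜ[ℚ] y ∈ S) :
    tensorGrading gV gW n ≤ S := by
  refine iSup_le ?_
  rintro ⟨⟨i, j⟩, hij⟩
  rintro _ ⟨z, rfl⟩
  induction z using TensorProduct.induction_on with
  | zero => simp
  | tmul x y => exact h i j hij x x.2 y y.2
  | add a b ha hb => rw [map_add]; exact add_mem ha hb

section
variable {C : CoaugDGCoalgebra}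

/-- Scaling of degree `n` elements by `q ^ (n - 1)`. -/
def scaleC (C : CoaugDGCoalgebra) (q : ℚ) : C.carrier →ₗ[ℚ] C.carrier :=
  (DirectSum.toModule ℚ ℤ C.carrier fun n => (q ^ (n - 1)) • (C.grading n).subtype).comp
    (DirectSum.decomposeLinearEquiv C.grading).toLinearMap

lemma scaleC_mem (q : ℚ) {n : ℤ} {x : C.carrier} (hx : x ∈ C.grading n) :
    scaleC C q x = q ^ (n - 1) • x := by
  simp only [scaleC, LinearMap.comp_apply, LinearEquiv.coe_coe,
    DirectSum.decomposeLinearEquiv_apply]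
  rw [DirectSum.decompose_of_mem _ hx, ← DirectSum.lof_eq_of ℚ, DirectSum.toModule_lof]
  simp

/-- The algebra map scaling degree `n` by `q ^ n`. -/
def scaleT (C : CoaugDGCoalgebra) (q : ℚ) : T C →ₐ[ℚ] T C := tlift ((tt C).comp (scaleC C q))

lemma scaleT_tt (q : ℚ) (c : C.carrier) : scaleT C q (tt C c) = tt C (scaleC C q c) := by
  rw [scaleT, tlift_tt]
  · rfl
  · rw [LinearMap.comp_apply, scaleC_mem q C.one_mem, map_smul, tt_one, smul_zero]

lemma scaleT_mem {q : ℚ} (hq : q ≠ 0) {n : ℤ} {x : T C} (hx : x ∈ Fil C 0 n) :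
    scaleT C q x = q ^ n • x := by
  suffices Fil C 0 n ≤ LinearMap.eqLocus (scaleT C q).toLinearMap (q ^ n • LinearMap.id) from
    this hx
  refine Submodule.span_le.2 ?_
  clear hx
  rintro x ⟨k, hk, hx⟩
  clear hk
  simp only [SetLike.mem_coe, LinearMap.mem_eqLocus, AlgHom.toLinearMap_apply,
    LinearMap.smul_apply, LinearMap.id_apply]
  induction hx with
  | one => simp
  | cons m c k n x hm hc hx ih =>
    rw [map_mul, ih, scaleT_tt, scaleC_mem q hc, map_smul, zpow_add₀ hq, smul_mul_smul_comm]

/-- The parity automorphism. -/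
def sig (C : CoaugDGCoalgebra) : T C →ₐ[ℚ] T C := scaleT C (-1)

lemma sig_mem {n : ℤ} {x : T C} (hx : x ∈ Fil C 0 n) : sig C x = (-1 : ℚ) ^ n • x :=
  scaleT_mem (by norm_num) hx

lemma negone_zpow_sub (n : ℤ) : (-1 : ℚ) ^ (n - 1) = - (-1 : ℚ) ^ n := by
  rw [zpow_sub₀ (by norm_num)]; simp [div_neg]

lemma negone_zpow_sq (n : ℤ) : (-1 : ℚ) ^ n * (-1 : ℚ) ^ n = 1 := by
  rw [← mul_zpow]; simp

lemma sig_tt (c : C.carrier) : sig C (tt C c) = - tt C (parityOf C.grading c) := by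
  have : (sig C).toLinearMap.comp (tt C) = -((tt C).comp (parityOf C.grading)) := by
    refine lin_ext C.grading fun n x hx => ?_
    simp only [LinearMap.comp_apply, LinearMap.neg_apply, AlgHom.toLinearMap_apply]
    rw [sig, scaleT_tt, scaleC_mem _ hx, parityOf_mem _ _ _ hx, negone_zpow_sub, neg_smul, map_neg]
  exact LinearMap.congr_fun this c

lemma sig_tt_mem (hC : C.TwoReduced) (m : ℤ) (c : C.carrier) (hc : c ∈ C.grading m) :
    sig C (tt C c) ∈ Fil C 1 (m - 1) := by
  have h := tt_mem_Fil hC hc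
  rw [sig_mem (Fil_mono (Nat.zero_le _) _ h)]
  exact Submodule.smul_mem _ _ h

lemma parity_parity (c : C.carrier) : parityOf C.grading (parityOf C.grading c) = c := by
  have : (parityOf C.grading).comp (parityOf C.grading) = LinearMap.id := by
    refine lin_ext C.grading fun n x hx => ?_
    simp only [LinearMap.comp_apply, LinearMap.id_apply]
    rw [parityOf_mem _ _ _ hx, map_smul, parityOf_mem _ _ _ hx, smul_smul, negone_zpow_sq, one_smul]
  exact LinearMap.congr_fun this c

lemma sig_sig (hC : C.TwoReduced) (x : T C) : sig C (sig C x) = x := by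
  have : (sig C).toLinearMap.comp (sig C).toLinearMap = LinearMap.id := by
    refine tfil_ext hC fun n x hx => ?_
    simp only [LinearMap.comp_apply, LinearMap.id_apply, AlgHom.toLinearMap_apply]
    rw [sig_mem hx, map_smul, sig_mem hx, smul_smul, negone_zpow_sq, one_smul]
  exact LinearMap.congr_fun this x

lemma parity_d (c : C.carrier) :
    parityOf C.grading (C.d c) = - C.d (parityOf C.grading c) := by
  have : (parityOf C.grading).comp C.d = - C.d.comp (parityOf C.grading) := by
    refine lin_ext C.grading fun n x hx => ?_
    simp only [LinearMap.comp_apply, LinearMap.neg_apply]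
    rw [parityOf_mem _ _ _ hx, map_smul, parityOf_mem _ _ _ (C.d_mem _ _ hx), negone_zpow_sub,
      neg_smul]
  exact LinearMap.congr_fun this c

lemma parity_comul (c : C.carrier) :
    C.comul (parityOf C.grading c) =
      TensorProduct.map (parityOf C.grading) (parityOf C.grading) (C.comul c) := by
  have : C.comul.comp (parityOf C.grading) =
      (TensorProduct.map (parityOf C.grading) (parityOf C.grading)).comp C.comul := by
    refine lin_ext C.grading fun n x hx => ?_
    simp only [LinearMap.comp_apply]
    rw [parityOf_mem _ _ _ hx, map_smul]
    have := tensorGrading_le C.grading C.grading n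
      (LinearMap.eqLocus ((-1 : ℚ) ^ n • LinearMap.id)
        (TensorProduct.map (parityOf C.grading) (parityOf C.grading))) (by
        rintro i j rfl x hx y hy
        rw [LinearMap.mem_eqLocus, TensorProduct.map_tmul, parityOf_mem _ _ _ hx,
          parityOf_mem _ _ _ hy, TensorProduct.smul_tmul_smul, zpow_add₀ (by norm_num)]
        rfl) (C.comul_mem n x hx)
    exact this
  exact LinearMap.congr_fun this c

lemma d_one (C : CoaugDGCoalgebra) : C.d C.one = 0 := by
  have := C.d_mem 0 _ C.one_mem
  rwa [C.nonneg _ (by norm_num), Submodule.mem_bot] at this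

/-- The quadratic part of the cobar differential, up to sign. -/
def MM (C : CoaugDGCoalgebra) : C.carrier →ₗ[ℚ] T C :=
  ((LinearMap.mul' ℚ (T C)).comp
    (TensorProduct.map ((tt C).comp (parityOf C.grading)) (tt C))).comp C.comul

lemma MM_one : MM C C.one = 0 := by
  simp [MM, C.comul_one, tt_one]

lemma MM_mem (hC : C.TwoReduced) {m : ℤ} {c : C.carrier} (hc : c ∈ C.grading m) :
    MM C c ∈ Fil C 2 (m - 2) := by
  have := tensorGrading_le C.grading C.grading m
    ((Fil C 2 (m - 2)).comap ((LinearMap.mul' ℚ (T C)).comp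
      (TensorProduct.map ((tt C).comp (parityOf C.grading)) (tt C)))) (by
      rintro i j rfl x hx y hy
      simp only [Submodule.mem_comap, LinearMap.comp_apply, TensorProduct.map_tmul,
        LinearMap.mul'_apply]
      rw [parityOf_mem _ _ _ hx, map_smul, smul_mul_assoc]
      refine Submodule.smul_mem _ _ ?_
      convert Fil_mul (tt_mem_Fil hC hx) (tt_mem_Fil hC hy) using 2
      ring) (C.comul_mem m c hc)
  exact this

/-- Linear part of the differential. -/
def d1 (C : CoaugDGCoalgebra) : T C →ₗ[ℚ] T C :=
  der (sig C) (AlgHom.id ℚ _) (-((tt C).comp C.d))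

/-- Quadratic part of the differential. -/
def d2 (C : CoaugDGCoalgebra) : T C →ₗ[ℚ] T C :=
  der (sig C) (AlgHom.id ℚ _) (-(MM C))

/-- The cobar differential. -/
def dT (C : CoaugDGCoalgebra) : T C →ₗ[ℚ] T C := d1 C + d2 C

lemma d1_tt (c : C.carrier) : d1 C (tt C c) = - tt C (C.d c) := by
  rw [d1, der_tt]
  · rfl
  · simp [d_one]

lemma d2_tt (c : C.carrier) : d2 C (tt C c) = - MM C c := by
  rw [d2, der_tt]
  · rfl
  · simp [MM_one]

lemma d1_mul (x y : T C) : d1 C (x * y) = sig C x * d1 C y + d1 C x * y := der_mul _ _ _ x y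

lemma d2_mul (x y : T C) : d2 C (x * y) = sig C x * d2 C y + d2 C x * y := der_mul _ _ _ x y

lemma d1_one : d1 C 1 = 0 := der_one _ _ _

lemma dT_one : dT C 1 = 0 := by simp [dT, d1, d2, der_one]

lemma dT_tt (c : C.carrier) : dT C (tt C c) = - tt C (C.d c) - MM C c := by
  rw [dT, LinearMap.add_apply, d1_tt, d2_tt, sub_eq_add_neg]

lemma dT_mul (x y : T C) : dT C (x * y) = sig C x * dT C y + dT C x * y := by
  simp only [dT, LinearMap.add_apply, d1_mul, d2_mul, mul_add, add_mul]
  abel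

lemma id_tt_mem (hC : C.TwoReduced) (m : ℤ) (c : C.carrier) (hc : c ∈ C.grading m) :
    AlgHom.id ℚ (T C) (tt C c) ∈ Fil C 1 (m - 1) := tt_mem_Fil hC hc

lemma d1_Fil (hC : C.TwoReduced) {p : ℕ} {n : ℤ} {x : T C} (hx : x ∈ Fil C p n) :
    d1 C x ∈ Fil C p (n - 1) := by
  refine der_Fil (sig C) _ (sig_tt_mem hC) (id_tt_mem hC) _ (by simp [d_one]) 0 (-1) ?_ hx
  intro m c hc
  exact neg_mem (tt_mem_Fil hC (C.d_mem m c hc))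

lemma d2_Fil (hC : C.TwoReduced) {p : ℕ} {n : ℤ} {x : T C} (hx : x ∈ Fil C p n) :
    d2 C x ∈ Fil C (p + 1) (n - 1) := by
  refine der_Fil (sig C) _ (sig_tt_mem hC) (id_tt_mem hC) _ (by simp [MM_one]) 1 (-1) ?_ hx
  intro m c hc
  have := neg_mem (MM_mem hC hc)
  rwa [show m - 2 = m - 1 + -1 by ring] at this

lemma dT_Fil (hC : C.TwoReduced) {p : ℕ} {n : ℤ} {x : T C} (hx : x ∈ Fil C p n) :
    dT C x ∈ Fil C p (n - 1) :=
  add_mem (d1_Fil hC hx) (Fil_mono (Nat.le_succ _) _ (d2_Fil hC hx))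

/-- Homogeneous maps commute with the parity up to sign. -/
lemma sig_comm (hC : C.TwoReduced) {D : CoaugDGCoalgebra} (E : T C →ₗ[ℚ] T D) (l : ℤ)
    (hE : ∀ n : ℤ, ∀ x ∈ Fil C 0 n, E x ∈ Fil D 0 (n + l)) (x : T C) :
    sig D (E x) = (-1 : ℚ) ^ l • E (sig C x) := by
  have : (sig D).toLinearMap.comp E = (-1 : ℚ) ^ l • E.comp (sig C).toLinearMap := by
    refine tfil_ext hC fun n x hx => ?_
    simp only [LinearMap.comp_apply, LinearMap.smul_apply, AlgHom.toLinearMap_apply]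
    rw [sig_mem hx, map_smul, sig_mem (hE n x hx), smul_smul, zpow_add₀ (by norm_num), mul_comm]
  exact LinearMap.congr_fun this x

lemma sig_dT (hC : C.TwoReduced) (x : T C) : sig C (dT C x) = - dT C (sig C x) := by
  have := sig_comm hC (dT C) (-1) (fun n x hx => dT_Fil hC hx) x
  simpa using this

lemma sig_d1 (hC : C.TwoReduced) (x : T C) : sig C (d1 C x) = - d1 C (sig C x) := by
  have := sig_comm hC (d1 C) (-1) (fun n x hx => d1_Fil hC hx) x
  simpa using this

lemma MM_parity : (MM C).comp (parityOf C.grading) = ((LinearMap.mul' ℚ (T C)).comp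
    (TensorProduct.map (tt C) ((tt C).comp (parityOf C.grading)))).comp C.comul := by
  ext c
  simp only [MM, LinearMap.comp_apply, parity_comul]
  rw [← LinearMap.comp_apply (TensorProduct.map _ _) (TensorProduct.map _ _),
    ← TensorProduct.map_comp]
  congr 3
  ext x
  simp [parity_parity]

lemma MM_coassoc :
    (LinearMap.mul' ℚ (T C)).comp
      ((TensorProduct.map ((MM C).comp (parityOf C.grading)) (tt C)).comp C.comul) =
    (LinearMap.mul' ℚ (T C)).comp ((TensorProduct.map (tt C) (MM C)).comp C.comul) := by
  have h1 : TensorProduct.map (tt C) (MM C) = (TensorProduct.map (tt C)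
      ((LinearMap.mul' ℚ (T C)).comp
        (TensorProduct.map ((tt C).comp (parityOf C.grading)) (tt C)))).comp
      (TensorProduct.map LinearMap.id C.comul) := by
    rw [← TensorProduct.map_comp]; rfl
  have h2 : TensorProduct.map ((MM C).comp (parityOf C.grading)) (tt C) =
      (TensorProduct.map ((LinearMap.mul' ℚ (T C)).comp
        (TensorProduct.map (tt C) ((tt C).comp (parityOf C.grading)))) (tt C)).comp
      (TensorProduct.map C.comul LinearMap.id) := by
    rw [← TensorProduct.map_comp, MM_parity]; rfl
  have h3 : (LinearMap.mul' ℚ (T C)).comp (TensorProduct.map ((LinearMap.mul' ℚ (T C)).comp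
        (TensorProduct.map (tt C) ((tt C).comp (parityOf C.grading)))) (tt C)) =
      ((LinearMap.mul' ℚ (T C)).comp (TensorProduct.map (tt C)
      ((LinearMap.mul' ℚ (T C)).comp
        (TensorProduct.map ((tt C).comp (parityOf C.grading)) (tt C))))).comp
      (TensorProduct.assoc ℚ C.carrier C.carrier C.carrier).toLinearMap := by
    apply TensorProduct.ext_threefold
    intro x y z
    simp [mul_assoc]
  ext c
  have h4 := LinearMap.congr_fun h3 (TensorProduct.map C.comul LinearMap.id (C.comul c))
  have h5 := LinearMap.congr_fun C.coassoc c
  rw [h1, h2]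
  simp only [LinearMap.comp_apply] at h4 h5 ⊢
  rw [h4, h5]

lemma dT_MM (hC : C.TwoReduced) (c : C.carrier) : dT C (MM C c) = MM C (C.d c) := by
  have h1 : (dT C).comp ((LinearMap.mul' ℚ (T C)).comp
      (TensorProduct.map ((tt C).comp (parityOf C.grading)) (tt C))) =
      ((LinearMap.mul' ℚ (T C)).comp
        (TensorProduct.map ((tt C).comp (parityOf C.grading)) (tt C))).comp
        (TensorProduct.map C.d LinearMap.id + TensorProduct.map (parityOf C.grading) C.d)
      + ((LinearMap.mul' ℚ (T C)).comp (TensorProduct.map (tt C) (MM C)) -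
        (LinearMap.mul' ℚ (T C)).comp
          (TensorProduct.map ((MM C).comp (parityOf C.grading)) (tt C))) := by
    apply TensorProduct.ext'
    intro x y
    simp only [LinearMap.comp_apply, LinearMap.add_apply, LinearMap.sub_apply,
      TensorProduct.map_tmul, LinearMap.mul'_apply, map_add, LinearMap.id_apply]
    rw [dT_mul, dT_tt, dT_tt, sig_tt, parity_parity, parity_d, map_neg]
    noncomm_ring
  have h2 := LinearMap.congr_fun h1 (C.comul c)
  have h3 := LinearMap.congr_fun (MM_coassoc (C := C)) c
  have h4 := LinearMap.congr_fun C.comul_chain c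
  simp only [LinearMap.comp_apply, LinearMap.add_apply, LinearMap.sub_apply] at h2 h3 h4
  simp only [MM, LinearMap.comp_apply, h4] at *
  rw [h2, h3, sub_self, add_zero]

lemma dT_dT (hC : C.TwoReduced) : (dT C).comp (dT C) = 0 := by
  refine tlin_ext hC (by simp [dT_one]) fun m c _ x hx => ?_
  simp only [LinearMap.comp_apply, LinearMap.zero_apply] at *
  have h : dT C (dT C (tt C c)) = 0 := by
    rw [dT_tt, map_sub, map_neg, dT_tt, dT_MM hC]
    have : C.d (C.d c) = 0 := LinearMap.congr_fun C.d_sq c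
    simp [this]
  rw [dT_mul, map_add, dT_mul, dT_mul, hx, h, sig_dT hC]
  simp

lemma isInternal_Fil (hC : C.TwoReduced) : DirectSum.IsInternal (Fil C 0) := by
  refine DirectSum.isInternal_submodule_of_iSupIndep_of_iSup_eq_top ?_ (iSup_Fil hC)
  have h := Module.End.eigenspaces_iSupIndep (scaleT C 2).toLinearMap
  have inj : Function.Injective (fun n : ℤ => (2 : ℚ) ^ n) :=
    zpow_right_injective₀ (by norm_num) (by norm_num)
  refine (h.comp inj).mono fun n x hx => ?_
  rw [Function.comp_apply, Module.End.mem_eigenspace_iff]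
  exact scaleT_mem (by norm_num) hx

lemma Fil_mul_zero {n m : ℤ} {x y : T C} (hx : x ∈ Fil C 0 n) (hy : y ∈ Fil C 0 m) :
    x * y ∈ Fil C 0 (n + m) := by
  have := Fil_mul hx hy
  rwa [Nat.add_zero] at this

/-- The concrete cobar construction. -/
def cobar (C : CoaugDGCoalgebra) (hC : C.TwoReduced) : DGAlgebra where
  carrier := T C
  grading := Fil C 0
  isDecomp := (isInternal_Fil hC).chooseDecomposition
  d := dT C
  d_mem := fun n x hx => dT_Fil hC hx
  d_sq := dT_dT hC
  mul := LinearMap.mul ℚ (T C)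
  one := 1
  one_mem := one_mem_Fil
  mul_mem := fun i j x y hx hy => Fil_mul_zero hx hy
  mul_assoc' := fun x y z => mul_assoc x y z
  one_mul' := fun x => one_mul x
  mul_one' := fun x => mul_one x
  leibniz := fun i x y hx => by
    simp only [LinearMap.mul_apply']
    rw [dT_mul, sig_mem hx, smul_mul_assoc, add_comm]

/-- The universal twisting chain of the concrete cobar construction. -/
def cobarTwist (C : CoaugDGCoalgebra) (hC : C.TwoReduced) :
    TwistingChain C.toDGCoalgebra (cobar C hC) where
  toFun := tt C
  mem := fun n x hx => Fil_mono (Nat.zero_le _) _ (tt_mem_Fil hC hx)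
  twist := by
    refine LinearMap.ext fun c => ?_
    have h := dT_tt (C := C) c
    change dT C (tt C c) + tt C (C.d c) + MM C c = 0
    rw [h]; abel

end
end CobarProof

namespace CobarProof

/-- The ring underlying a dg algebra. -/
abbrev ringOf (A : DGAlgebra) : Ring A.carrier :=
  { A.isAddCommGroup with
    mul := fun x y => A.mul x y
    one := A.one
    mul_assoc := A.mul_assoc'
    one_mul := A.one_mul'
    mul_one := A.mul_one'
    left_distrib := fun x y z => map_add (A.mul x) y z
    right_distrib := fun x y z => LinearMap.map_add₂ A.mul x y z
    zero_mul := fun x => LinearMap.map_zero₂ A.mul x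
    mul_zero := fun x => map_zero (A.mul x) }

lemma exists_alg {C : CoaugDGCoalgebra} (A : DGAlgebra) (L : C.carrier →ₗ[ℚ] A.carrier)
    (hL : L C.one = 0) : ∃ J : T C →ₗ[ℚ] A.carrier, J 1 = A.one ∧
      (∀ x y, J (x * y) = A.mul (J x) (J y)) ∧ ∀ c, J (tt C c) = L c := by
  letI : Ring A.carrier := ringOf A
  letI : Algebra ℚ A.carrier := Algebra.ofModule
    (fun r x y => LinearMap.map_smul₂ A.mul r x y) (fun r x y => map_smul (A.mul x) r y)
  let J : T C →ₐ[ℚ] A.carrier := tlift L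
  exact ⟨J.toLinearMap, map_one J, fun x y => map_mul J x y, fun c => tlift_tt L hL c⟩

lemma exists_hom {C : CoaugDGCoalgebra} (hC : C.TwoReduced) (A : DGAlgebra)
    (τ : TwistingChain C.toDGCoalgebra A) (hτ : τ.toFun C.one = 0) :
    ∃ J : DGAlgebraHom (cobar C hC) A, ∀ c, J.toLinearMap (tt C c) = τ.toFun c := by
  obtain ⟨J, J1, Jm, Jt⟩ := exists_alg A τ.toFun hτ
  refine ⟨⟨J, ?_, ?_, J1, Jm⟩, Jt⟩
  · intro n x hx
    suffices Fil C 0 n ≤ (A.grading n).comap J from this hx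
    refine Submodule.span_le.2 ?_
    clear hx
    rintro x ⟨k, hk, hx⟩
    clear hk
    induction hx with
    | one => simpa [J1] using A.one_mem
    | cons m c k n x hm hc hx ih =>
      simp only [SetLike.mem_coe, Submodule.mem_comap] at *
      rw [Jm, Jt]
      exact A.mul_mem _ _ _ _ (τ.mem m c hc) ih
  · change J.comp (dT C) = A.d.comp J
    have A1 : A.d A.one = 0 := by
      have h := A.leibniz 0 A.one A.one A.one_mem
      simpa [A.mul_one', A.one_mul'] using h
    refine tlin_ext hC (by simp [dT_one, J1, A1]) fun m c hc x hx => ?_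
    simp only [LinearMap.comp_apply] at *
    have hM : J (MM C c) =
        A.mulMap (TensorProduct.map (τ.toFun.comp (parityOf C.grading)) τ.toFun (C.comul c)) := by
      have : J.comp ((LinearMap.mul' ℚ (T C)).comp
          (TensorProduct.map ((tt C).comp (parityOf C.grading)) (tt C))) =
          A.mulMap.comp (TensorProduct.map (τ.toFun.comp (parityOf C.grading)) τ.toFun) := by
        apply TensorProduct.ext'
        intro x y
        simp [DGAlgebra.mulMap, Jm, Jt]
      exact LinearMap.congr_fun this (C.comul c)
    have hg : J (dT C (tt C c)) = A.d (τ.toFun c) := by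
      have h := LinearMap.congr_fun τ.twist c
      simp only [LinearMap.add_apply, LinearMap.comp_apply, LinearMap.zero_apply] at h
      rw [dT_tt, map_sub, map_neg, Jt, hM]
      linear_combination (norm := module) -h
    have hs := sig_mem (Fil_mono (Nat.zero_le _) _ (tt_mem_Fil hC hc))
    rw [dT_mul, map_add, Jm, Jm, Jm, Jt, hg, hx, hs, map_smul, Jt,
      A.leibniz (m - 1) _ _ (τ.mem m c hc), LinearMap.map_smul₂, add_comm]

/-- Composition of dg algebra maps. -/
def homComp {A B E : DGAlgebra} (g : DGAlgebraHom B E) (f : DGAlgebraHom A B) :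
    DGAlgebraHom A E where
  toLinearMap := g.toLinearMap.comp f.toLinearMap
  mem := fun n x hx => g.mem n _ (f.mem n x hx)
  chain := by
    rw [LinearMap.comp_assoc, f.chain, ← LinearMap.comp_assoc, g.chain, LinearMap.comp_assoc]
  map_one := by simp [f.map_one, g.map_one]
  map_mul := fun x y => by simp [f.map_mul, g.map_mul]

/-- The identity dg algebra map. -/
def homId (A : DGAlgebra) : DGAlgebraHom A A where
  toLinearMap := LinearMap.id
  mem := fun n x hx => hx
  chain := rfl
  map_one := rfl
  map_mul := fun x y => rfl

/-- Any cobar construction is isomorphic to the concrete one. -/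
lemma exists_iso {C : CoaugDGCoalgebra} (hC : C.TwoReduced) (Ω : CobarData C) :
    ∃ (J : T C →ₗ[ℚ] Ω.alg.carrier) (G : Ω.alg.carrier →ₗ[ℚ] T C),
      J 1 = Ω.alg.one ∧ (∀ x y : T C, J (x * y) = Ω.alg.mul (J x) (J y)) ∧
      (∀ x, J (dT C x) = Ω.alg.d (J x)) ∧
      (∀ c, J (tt C c) = Ω.t.toFun c) ∧ (∀ x, G (J x) = x) ∧
      (∀ x, J (G x) = x) ∧ (∀ x, G (Ω.alg.d x) = dT C (G x)) := by
  obtain ⟨J0, hJ0⟩ := exists_hom hC Ω.alg Ω.t Ω.t_one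
  obtain ⟨G0, hG0, -⟩ := Ω.univ (cobar C hC) (cobarTwist C hC) tt_one
  obtain ⟨J, hJ, J1, Jm, Jd, Jt⟩ : ∃ J : T C →ₗ[ℚ] Ω.alg.carrier, J = J0.toLinearMap ∧
      J 1 = Ω.alg.one ∧ (∀ x y : T C, J (x * y) = Ω.alg.mul (J x) (J y)) ∧
      (∀ x, J (dT C x) = Ω.alg.d (J x)) ∧ (∀ c, J (tt C c) = Ω.t.toFun c) :=
    ⟨J0.toLinearMap, rfl, J0.map_one, J0.map_mul, fun x => LinearMap.congr_fun J0.chain x, hJ0⟩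
  obtain ⟨G, hG, G1, Gm, Gd, Gt⟩ : ∃ G : Ω.alg.carrier →ₗ[ℚ] T C, G = G0.toLinearMap ∧
      G Ω.alg.one = 1 ∧ (∀ x y, G (Ω.alg.mul x y) = G x * G y) ∧
      (∀ x, G (Ω.alg.d x) = dT C (G x)) ∧ (∀ c, G (Ω.t.toFun c) = tt C c) :=
    ⟨G0.toLinearMap, rfl, G0.map_one, G0.map_mul, fun x => LinearMap.congr_fun G0.chain x,
      fun c => LinearMap.congr_fun hG0 c⟩
  refine ⟨J, G, J1, Jm, Jd, Jt, ?_, ?_, Gd⟩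
  · have : G.comp J = LinearMap.id := by
      refine tlin_ext hC (by simp [J1, G1]) fun m c hc x hx => ?_
      simp only [LinearMap.comp_apply, LinearMap.id_apply] at *
      rw [Jm, Gm, hx, Jt, Gt]
    exact fun x => LinearMap.congr_fun this x
  · have := (Ω.univ Ω.alg Ω.t Ω.t_one).unique (y₁ := homComp J0 G0) (y₂ := homId Ω.alg)
      (by
        refine LinearMap.ext fun c => ?_
        have h : J (G (Ω.t.toFun c)) = Ω.t.toFun c := by rw [Gt, Jt]
        rw [hJ, hG] at h
        exact h) rfl
    intro x
    have h := congrArg (fun f => DGAlgebraHom.toLinearMap f x) this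
    rw [hJ, hG]
    exact h

/-- Filtered comparison of a map which is a homotopy equivalence up to higher filtration. -/
lemma filtered_step {X Y : Type} [AddCommGroup X] [Module ℚ X] [AddCommGroup Y] [Module ℚ Y]
    (FX : ℕ → ℤ → Submodule ℚ X) (FY : ℕ → ℤ → Submodule ℚ Y)
    (d : X →ₗ[ℚ] X) (d' : Y →ₗ[ℚ] Y) (f : X →ₗ[ℚ] Y) (g : Y →ₗ[ℚ] X)
    (H : X →ₗ[ℚ] X) (H' : Y →ₗ[ℚ] Y)
    (hd' : ∀ p n, ∀ x ∈ FY p n, d' x ∈ FY p (n - 1))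
    (dd : ∀ x, d (d x) = 0) (hfd : ∀ x, f (d x) = d' (f x))
    (hf : ∀ p n, ∀ x ∈ FX p n, f x ∈ FY p n) (hg : ∀ p n, ∀ x ∈ FY p n, g x ∈ FX p n)
    (hH : ∀ p n, ∀ x ∈ FX p n, H x ∈ FX p (n + 1))
    (hH' : ∀ p n, ∀ x ∈ FY p n, H' x ∈ FY p (n + 1))
    (hgd : ∀ p n, ∀ y ∈ FY p n, d (g y) - g (d' y) ∈ FX (p + 1) (n - 1))
    (h1 : ∀ p n, ∀ x ∈ FX p n, g (f x) - x - (d (H x) + H (d x)) ∈ FX (p + 1) n)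
    (h2 : ∀ p n, ∀ y ∈ FY p n, f (g y) - y - (d' (H' y) + H' (d' y)) ∈ FY (p + 1) n)
    (p : ℕ) (n : ℤ) (x : X) (y : Y) (hx : x ∈ FX p n) (hy : y ∈ FY p (n + 1))
    (hdx : d x = 0) (hxy : f x + d' y = 0) :
    ∃ z ∈ FX p (n + 1), ∃ w ∈ FY p (n + 2),
      x + d z ∈ FX (p + 1) n ∧ y - f z - d' w ∈ FY (p + 1) (n + 1) := by
  have hz0 : g y + H x ∈ FX p (n + 1) := add_mem (hg _ _ _ hy) (hH _ _ _ hx)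
  have hxz : x + d (g y + H x) ∈ FX (p + 1) n := by
    have a1 := h1 _ _ _ hx
    have a2 := hgd _ _ _ hy
    rw [add_sub_cancel_right] at a2
    have e : f x = - d' y := eq_neg_of_add_eq_zero_left hxy
    rw [e, hdx, map_neg, map_zero] at a1
    have := sub_mem a2 a1
    rw [map_add]
    convert this using 1
    abel
  have hy' : y - f (g y + H x) ∈ FY p (n + 1) := sub_mem hy (hf _ _ _ hz0)
  have hdy' : d' (y - f (g y + H x)) ∈ FY (p + 1) n := by
    have e : d' y = - f x := eq_neg_of_add_eq_zero_right hxy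
    have := neg_mem (hf _ _ _ hxz)
    rw [map_sub, ← hfd, e]
    convert this using 1
    rw [map_add f]; abel
  set y' := y - f (g y + H x) with hy'def
  refine ⟨g y + H x + g y', add_mem hz0 (hg _ _ _ hy'), - H' y', neg_mem ?_, ?_, ?_⟩
  · have := hH' _ _ _ hy'
    rwa [add_assoc] at this
  · have a2 := hgd _ _ _ hy'
    rw [add_sub_cancel_right] at a2
    have := add_mem hxz (add_mem a2 (hg _ _ _ hdy'))
    convert this using 1
    rw [map_add d (g y + H x)]; abel
  · have a := h2 _ _ _ hy'
    have := neg_mem (add_mem a (hH' _ _ _ hdy'))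
    convert this using 1
    rw [map_neg, map_add f (g y + H x), sub_add_eq_sub_sub, ← hy'def]
    abel

lemma filtered_main {X Y : Type} [AddCommGroup X] [Module ℚ X] [AddCommGroup Y] [Module ℚ Y]
    (FX : ℕ → ℤ → Submodule ℚ X) (FY : ℕ → ℤ → Submodule ℚ Y)
    (d : X →ₗ[ℚ] X) (d' : Y →ₗ[ℚ] Y) (f : X →ₗ[ℚ] Y)
    (dd : ∀ x, d (d x) = 0) (dd' : ∀ x, d' (d' x) = 0) (hfd : ∀ x, f (d x) = d' (f x))
    (hX : ∀ (p : ℕ) (n : ℤ), n < p → FX p n = ⊥) (hY : ∀ (p : ℕ) (n : ℤ), n < p → FY p n = ⊥)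
    (step : ∀ (p : ℕ) (n : ℤ) (x : X) (y : Y), x ∈ FX p n → y ∈ FY p (n + 1) →
      d x = 0 → f x + d' y = 0 →
      ∃ z ∈ FX p (n + 1), ∃ w ∈ FY p (n + 2),
        x + d z ∈ FX (p + 1) n ∧ y - f z - d' w ∈ FY (p + 1) (n + 1))
    (n : ℤ) (x : X) (y : Y) (hx : x ∈ FX 0 n) (hy : y ∈ FY 0 (n + 1))
    (hdx : d x = 0) (hxy : f x + d' y = 0) :
    ∃ z w, x + d z = 0 ∧ y = f z + d' w := by
  have key : ∀ p : ℕ, ∃ z w, x + d z ∈ FX p n ∧ y - f z - d' w ∈ FY p (n + 1) := by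
    intro p
    induction p with
    | zero => exact ⟨0, 0, by simpa using hx, by simpa using hy⟩
    | succ p ih =>
      obtain ⟨z, w, h1, h2⟩ := ih
      obtain ⟨z', -, w', -, h3, h4⟩ := step p n _ _ h1 h2 (by simp [hdx, dd])
        (by
          simp only [map_add, map_sub, dd', hfd]
          linear_combination (norm := module) hxy)
      refine ⟨z + z', w + w', ?_, ?_⟩
      · convert h3 using 1; rw [map_add]; abel
      · convert h4 using 1; rw [map_add, map_add]; abel
  obtain ⟨z, w, h1, h2⟩ := key (n + 2).toNat
  rw [hX _ _ (by omega), Submodule.mem_bot] at h1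
  rw [hY _ _ (by omega), Submodule.mem_bot] at h2
  refine ⟨z, w, h1, ?_⟩
  linear_combination (norm := module) h2

/-- From homogeneous acyclicity of the cone to a quasi-isomorphism. -/
lemma quasiIso_of_homogeneous {X Y : Type} [AddCommGroup X] [Module ℚ X] [AddCommGroup Y]
    [Module ℚ Y] (gX : ℤ → Submodule ℚ X) (gY : ℤ → Submodule ℚ Y)
    [DirectSum.Decomposition gX] [DirectSum.Decomposition gY]
    (d : X →ₗ[ℚ] X) (d' : Y →ₗ[ℚ] Y) (f : X →ₗ[ℚ] Y)
    (hd : ∀ n, ∀ x ∈ gX n, d x ∈ gX (n - 1)) (hd' : ∀ n, ∀ x ∈ gY n, d' x ∈ gY (n - 1))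
    (hf : ∀ n, ∀ x ∈ gX n, f x ∈ gY n)
    (H : ∀ (n : ℤ) (x : X) (y : Y), x ∈ gX n → y ∈ gY (n + 1) → d x = 0 → f x + d' y = 0 →
      ∃ z w, x + d z = 0 ∧ y = f z + d' w) : IsQuasiIso d d' f := by
  constructor
  · rintro x hx ⟨y, hy⟩
    have hn : ∀ n, ∃ z, proj gX n x = d z := by
      intro n
      have e1 := proj_comm gX gX (k := -1) hd n (n - 1) (by ring) x
      have e2 := proj_comm gX gY (k := 0) (by simpa using hf) n n (by ring) x
      have e3 := proj_comm gY gY (k := -1) hd' (n + 1) n (by ring) y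
      obtain ⟨z, w, h1, -⟩ := H n (proj gX n x) (- proj gY (n + 1) y) (proj_mem _ _ _)
        (neg_mem (proj_mem _ _ _)) (by rw [← e1, hx, map_zero])
        (by rw [map_neg, ← e2, ← e3, hy, add_neg_cancel])
      exact ⟨-z, by rw [map_neg]; exact eq_neg_of_add_eq_zero_left h1⟩
    choose z hz using hn
    obtain ⟨s, hs⟩ := sum_proj gX x
    refine ⟨∑ n ∈ s, z n, ?_⟩
    rw [map_sum, ← hs s subset_rfl]
    conv_lhs => rw [hs s subset_rfl]
    conv_lhs => rw [← hs s subset_rfl]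
    exact Finset.sum_congr rfl fun n _ => hz n
  · intro w hw
    have hn : ∀ n, ∃ x y, d x = 0 ∧ proj gY n w = f x + d' y := by
      intro n
      have e := proj_comm gY gY (k := -1) hd' n (n - 1) (by ring) w
      obtain ⟨z, y, h1, h2⟩ := H (n - 1) 0 (proj gY n w) (zero_mem _)
        (by rw [sub_add_cancel]; exact proj_mem _ _ _) (map_zero _)
        (by rw [← e, hw, map_zero, map_zero, add_zero])
      exact ⟨z, y, by simpa using h1, h2⟩
    choose x y h1 h2 using hn
    obtain ⟨s, hs⟩ := sum_proj gY w
    refine ⟨∑ n ∈ s, x n, by simp [h1], ∑ n ∈ s, y n, ?_⟩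
    rw [sub_eq_iff_eq_add, map_sum, map_sum, ← Finset.sum_add_distrib]
    conv_lhs => rw [← hs s subset_rfl]
    exact Finset.sum_congr rfl fun n _ => by rw [h2, add_comm]

section
variable {C D : CoaugDGCoalgebra}

lemma alg_d1 (hC : C.TwoReduced) (hD : D.TwoReduced) (u : C.carrier →ₗ[ℚ] D.carrier)
    (hu : ∀ n, ∀ x ∈ C.grading n, u x ∈ D.grading n) (hud : ∀ x, u (C.d x) = D.d (u x))
    (e : T C →ₐ[ℚ] T D) (he : ∀ c, e (tt C c) = tt D (u c)) (x : T C) :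
    e (d1 C x) = d1 D (e x) := by
  have hs : ∀ x, sig D (e x) = e (sig C x) := by
    intro x
    have := sig_comm hC e.toLinearMap 0 (fun n x hx => by
      rw [add_zero]
      exact alg_Fil e (fun m c hc => by rw [he]; exact tt_mem_Fil hD (hu m c hc)) hx) x
    simpa using this
  have : e.toLinearMap.comp (d1 C) = (d1 D).comp e.toLinearMap := by
    refine tlin_ext hC (by simp [d1_one]) fun m c hc x hx => ?_
    simp only [LinearMap.comp_apply, AlgHom.toLinearMap_apply] at *
    rw [d1_mul, map_add, map_mul, map_mul, map_mul, d1_mul, hx, hs, d1_tt, he, d1_tt, map_neg, he,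
      hud]
  exact LinearMap.congr_fun this x

/-- The homotopy on `T C` induced by a homotopy on `C`. -/
lemma exists_homotopy (hC : C.TwoReduced) (u a : C.carrier →ₗ[ℚ] C.carrier)
    (hu : ∀ n, ∀ x ∈ C.grading n, u x ∈ C.grading n) (hud : ∀ x, u (C.d x) = C.d (u x))
    (ha : ∀ n, ∀ x ∈ C.grading n, a x ∈ C.grading (n + 1))
    (hua : ∀ x, u x - x = C.d (a x) + a (C.d x))
    (e : T C →ₐ[ℚ] T C) (he : ∀ c, e (tt C c) = tt C (u c)) :
    ∃ H : T C →ₗ[ℚ] T C, (∀ p n, ∀ x ∈ Fil C p n, H x ∈ Fil C p (n + 1)) ∧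
      ∀ x, e x - x = d1 C (H x) + H (d1 C x) := by
  have L1 : (-((tt C).comp a)) C.one = 0 := by
    simp [tt_low hC (by norm_num) (ha 0 _ C.one_mem)]
  have hFil : ∀ p n, ∀ x ∈ Fil C p n, e x ∈ Fil C p n := fun p n x hx =>
    alg_Fil e (fun m c hc => by rw [he]; exact tt_mem_Fil hC (hu m c hc)) hx
  have hHF : ∀ p n, ∀ x ∈ Fil C p n,
      der ((sig C).comp e) (AlgHom.id ℚ _) (-((tt C).comp a)) x ∈ Fil C p (n + 1) := by
    intro p n x hx
    refine der_Fil _ _ ?_ (id_tt_mem hC) _ L1 0 1 ?_ hx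
    · intro m c hc
      rw [AlgHom.comp_apply, he]
      exact sig_tt_mem hC m _ (hu m c hc)
    · intro m c hc
      have := neg_mem (tt_mem_Fil hC (ha m c hc))
      rwa [show m + 1 - 1 = m - 1 + 1 by ring] at this
  have hHt := der_tt ((sig C).comp e) (AlgHom.id ℚ _) (-((tt C).comp a)) L1
  have hHm := der_mul ((sig C).comp e) (AlgHom.id ℚ _) (-((tt C).comp a))
  have hH1 := der_one ((sig C).comp e) (AlgHom.id ℚ _) (-((tt C).comp a))
  refine ⟨der ((sig C).comp e) (AlgHom.id ℚ _) (-((tt C).comp a)), hHF, ?_⟩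
  generalize der ((sig C).comp e) (AlgHom.id ℚ _) (-((tt C).comp a)) = H at *
  have hs : ∀ x, sig C (e x) = e (sig C x) := by
    intro x
    have := sig_comm hC e.toLinearMap 0 (fun n x hx => by
      rw [add_zero]; exact hFil 0 n x hx) x
    simpa using this
  have hsH : ∀ x, sig C (H x) = - H (sig C x) := by
    intro x
    simpa using sig_comm hC H 1 (hHF 0) x
  have hed := alg_d1 hC hC u hu hud e he
  simp only [LinearMap.neg_apply, LinearMap.comp_apply] at hHt
  have : e.toLinearMap - LinearMap.id = (d1 C).comp H + H.comp (d1 C) := by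
    refine tlin_ext hC (by simp [d1_one, hH1]) fun m c hc x hx => ?_
    simp only [LinearMap.comp_apply, AlgHom.toLinearMap_apply, LinearMap.sub_apply,
      LinearMap.add_apply, LinearMap.id_apply] at *
    have hg : e (tt C c) - tt C c = d1 C (H (tt C c)) + H (d1 C (tt C c)) := by
      rw [he, hHt, d1_tt, map_neg, map_neg, hHt, d1_tt, neg_neg, neg_neg, ← map_add, ← map_sub, hua]
    have hx' : e x = x + (d1 C (H x) + H (d1 C x)) := by rw [← hx]; abel
    have hg' : e (tt C c) = tt C c + (d1 C (H (tt C c)) + H (d1 C (tt C c))) := by rw [← hg]; abel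
    have e1 : d1 C (H (tt C c * x)) = e (tt C c) * d1 C (H x) + d1 C (sig C (e (tt C c))) * H x
        + (sig C (H (tt C c)) * d1 C x + d1 C (H (tt C c)) * x) := by
      rw [hHm, map_add, d1_mul, d1_mul]
      simp [sig_sig hC]
    have e2 : H (d1 C (tt C c * x)) = e (tt C c) * H (d1 C x) + H (sig C (tt C c)) * d1 C x
        + (sig C (e (d1 C (tt C c))) * H x + H (d1 C (tt C c)) * x) := by
      rw [d1_mul, map_add, hHm, hHm]
      simp [hs, sig_sig hC]
    have e3 : sig C (e (d1 C (tt C c))) = - d1 C (sig C (e (tt C c))) := by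
      rw [hed, sig_d1 hC]
    rw [e1, e2, e3, hsH, map_mul, hx', mul_add]
    have e4 : e (tt C c) * x = tt C c * x + d1 C (H (tt C c)) * x + H (d1 C (tt C c)) * x := by
      rw [hg']; noncomm_ring
    rw [e4]
    noncomm_ring
  exact fun x => LinearMap.congr_fun this x

/-- The main comparison for the concrete cobar constructions. -/
lemma concrete (hC : C.TwoReduced) (hD : D.TwoReduced) (ψ : CoaugCoalgebraHom C D)
    (hψ : IsQuasiIso C.d D.d ψ.toLinearMap) (f : T C →ₐ[ℚ] T D)
    (hf : ∀ c, f (tt C c) = tt D (ψ.toLinearMap c)) (hfd : ∀ x, f (dT C x) = dT D (f x)) :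
    IsQuasiIso (dT C) (dT D) f.toLinearMap := by
  have hch : ∀ x, ψ.toLinearMap (C.d x) = D.d (ψ.toLinearMap x) :=
    fun x => LinearMap.congr_fun ψ.chain x
  obtain ⟨φ, a, b, hφ, ha, hb, hφd, hφa, hφb⟩ :=
    exists_graded_htpy C.toDGVect D.toDGVect ψ.toLinearMap ψ.mem hch hψ
  let g : T D →ₐ[ℚ] T C := tlift ((tt C).comp φ)
  have hg : ∀ c, g (tt D c) = tt C (φ c) := fun c => tlift_tt _ (by
    rw [LinearMap.comp_apply]; exact tt_low hC (by norm_num) (hφ 0 _ D.one_mem)) c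
  obtain ⟨H, hHF, hH⟩ := exists_homotopy hC (φ.comp ψ.toLinearMap) a
    (fun n x hx => hφ _ _ (ψ.mem _ _ hx)) (fun x => by simp [hch, hφd]) ha hφa
    (g.comp f) (fun c => by simp [hf, hg])
  obtain ⟨H', hHF', hH'⟩ := exists_homotopy hD (ψ.toLinearMap.comp φ) b
    (fun n x hx => ψ.mem _ _ (hφ _ _ hx)) (fun x => by simp [hch, hφd]) hb hφb
    (f.comp g) (fun c => by simp [hf, hg])
  have fF : ∀ p n, ∀ x ∈ Fil C p n, f x ∈ Fil D p n := fun p n x hx =>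
    alg_Fil f (fun m c hc => by rw [hf]; exact tt_mem_Fil hD (ψ.mem m c hc)) hx
  have gF : ∀ p n, ∀ x ∈ Fil D p n, g x ∈ Fil C p n := fun p n x hx =>
    alg_Fil g (fun m c hc => by rw [hg]; exact tt_mem_Fil hC (hφ m c hc)) hx
  letI : DirectSum.Decomposition (Fil C 0) := (isInternal_Fil hC).chooseDecomposition
  letI : DirectSum.Decomposition (Fil D 0) := (isInternal_Fil hD).chooseDecomposition
  refine quasiIso_of_homogeneous (Fil C 0) (Fil D 0) _ _ _ (fun n x hx => dT_Fil hC hx)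
    (fun n x hx => dT_Fil hD hx) (fF 0) ?_
  refine filtered_main (Fil C) (Fil D) _ _ _ (fun x => LinearMap.congr_fun (dT_dT hC) x)
    (fun x => LinearMap.congr_fun (dT_dT hD) x) hfd (fun p n h => Fil_bot h)
    (fun p n h => Fil_bot h) ?_
  refine filtered_step (Fil C) (Fil D) _ _ _ g.toLinearMap H H' (fun p n x hx => dT_Fil hD hx)
    (fun x => LinearMap.congr_fun (dT_dT hC) x) hfd fF gF hHF hHF' ?_ ?_ ?_
  · intro p n y hy
    have h := alg_d1 hD hC φ hφ hφd g hg y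
    have := sub_mem (d2_Fil hC (gF p n y hy)) (gF _ _ _ (d2_Fil hD hy))
    convert this using 1
    simp only [dT, LinearMap.add_apply, AlgHom.toLinearMap_apply, map_add, h]
    abel
  · intro p n x hx
    have h := hH x
    have h1 := d2_Fil hC (hHF p n x hx)
    have h2 := hHF _ _ _ (d2_Fil hC hx)
    rw [add_sub_cancel_right] at h1
    rw [sub_add_cancel] at h2
    convert neg_mem (add_mem h1 h2) using 1
    simp only [dT, LinearMap.add_apply, AlgHom.toLinearMap_apply, map_add, AlgHom.comp_apply] at *
    rw [h]; abel
  · intro p n x hx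
    have h := hH' x
    have h1 := d2_Fil hD (hHF' p n x hx)
    have h2 := hHF' _ _ _ (d2_Fil hD hx)
    rw [add_sub_cancel_right] at h1
    rw [sub_add_cancel] at h2
    convert neg_mem (add_mem h1 h2) using 1
    simp only [dT, LinearMap.add_apply, AlgHom.toLinearMap_apply, map_add, AlgHom.comp_apply] at *
    rw [h]; abel

end
end CobarProof

open CobarProof

/-- If `ψ : C → D` is a quasi-isomorphism of 2-reduced dg coalgebras,
then the induced morphism of cobar constructions `Ωψ : ΩC → ΩD` (the unique dg algebra
map with `Ωψ ∘ t_C = t_D ∘ ψ`) is a quasi-isomorphism of dg algebras. -/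
theorem cobar_of_quasiIso_is_quasiIso (C D : CoaugDGCoalgebra)
    (hC : C.TwoReduced) (hD : D.TwoReduced) (ψ : CoaugCoalgebraHom C D)
    (hψ : IsQuasiIso C.d D.d ψ.toLinearMap)
    (ΩC : CobarData C) (ΩD : CobarData D)
    (F : DGAlgebraHom ΩC.alg ΩD.alg)
    (hF : F.toLinearMap.comp ΩC.t.toFun = ΩD.t.toFun.comp ψ.toLinearMap) :
    IsQuasiIso ΩC.alg.d ΩD.alg.d F.toLinearMap := by
  obtain ⟨J, G, J1, Jm, Jd, hJ, hGJ, hJG, hGd⟩ := exists_iso hC ΩC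
  obtain ⟨J', G', J1', Jm', Jd', hJ', hGJ', hJG', hGd'⟩ := exists_iso hD ΩD
  have Fd : ∀ x, F.toLinearMap (ΩC.alg.d x) = ΩD.alg.d (F.toLinearMap x) :=
    fun x => LinearMap.congr_fun F.chain x
  let f : T C →ₐ[ℚ] T D := tlift ((tt D).comp ψ.toLinearMap)
  have hf : ∀ c, f (tt C c) = tt D (ψ.toLinearMap c) := fun c =>
    tlift_tt _ (by rw [LinearMap.comp_apply, ψ.map_one, tt_one]) c
  have hFJ : ∀ x : T C, F.toLinearMap (J x) = J' (f x) := by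
    have : F.toLinearMap.comp J = J'.comp f.toLinearMap := by
      refine tlin_ext hC ?_ fun m c hc x hx => ?_
      · simp only [LinearMap.comp_apply, AlgHom.toLinearMap_apply, map_one, J1, J1', F.map_one]
      · have h4 : F.toLinearMap (ΩC.t.toFun c) = ΩD.t.toFun (ψ.toLinearMap c) :=
          LinearMap.congr_fun hF c
        simp only [LinearMap.comp_apply, AlgHom.toLinearMap_apply] at *
        rw [Jm, F.map_mul, hx, map_mul, Jm', hf, hJ, hJ', h4]
    exact fun x => LinearMap.congr_fun this x
  have hfd : ∀ x, f (dT C x) = dT D (f x) := by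
    intro x
    rw [← hGJ' (f (dT C x)), ← hFJ, Jd, Fd, hFJ, ← Jd', hGJ']
  have hfG : ∀ x, f (G x) = G' (F.toLinearMap x) := by
    intro x
    rw [← hGJ' (f (G x)), ← hFJ, hJG]
  have hq := concrete hC hD ψ hψ f hf hfd
  constructor
  · rintro x hx ⟨y, hy⟩
    obtain ⟨z, hz⟩ := hq.1 (G x) (by rw [← hGd, hx, map_zero])
      ⟨G' y, by rw [AlgHom.toLinearMap_apply, hfG, hy, hGd']⟩
    exact ⟨J z, by rw [← Jd, ← hz, hJG]⟩
  · intro w hw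
    obtain ⟨x, hx, y, hy⟩ := hq.2 (G' w) (by rw [← hGd', hw, map_zero])
    refine ⟨J x, by rw [← Jd, hx, map_zero], J' y, ?_⟩
    rw [← Jd', ← hy, hFJ, AlgHom.toLinearMap_apply, map_sub, hJG']

end
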